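/- Let I be a closed interval and let f : I → I be continuous. If f has a cycle with over-rotation number ρ, and r is a rational number with ρ < r ≤ 1/2, then f has a cycle with over-rotation number r. Consequently, the set of over-rotation numbers of all cycles of f of period larger than 1 is either the intersection of ℚ with an interval whose one endpoint is 1/2, or the singleton {1/2}, or empty. -/

import Mathlib

open Function

/-- The number of sign changes of `f y - y` as `y` runs along the cyclic sequence
`x, f x, …, f^[q-1] x, f^[q] x (= x)`. -/
noncomputable def overCount (f : ℝ → ℝ) (x : ℝ) (q : ℕ) : ℕ :=
  ((Finset.range q).filter fun i =>
    (f (f^[i] x) - f^[i] x) * (f (f^[i + 1] x) - f^[i + 1] x) < 0).card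

/-- The over-rotation number of the cycle of a periodic point `x` of `f`. -/
noncomputable def overNum (f : ℝ → ℝ) (x : ℝ) : ℚ :=
  (overCount f x (minimalPeriod f x) : ℚ) / (2 * (minimalPeriod f x : ℚ))

/-- The set of over-rotation numbers of all cycles of period larger than `1` of `f` on `I`. -/
noncomputable def overNumSet (f : ℝ → ℝ) (I : Set ℝ) : Set ℚ :=
  {r | ∃ x ∈ I, 2 ≤ minimalPeriod f x ∧ overNum f x = r}

/-!
Join each point of a cycle to a nearest fixed point of `f`. Each of these intervals covers the one
of the next point, and `f y - y` has constant sign on it, so a loop of covering intervals has a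
length and a number of sign changes. A cycle with over-rotation number `ρ < 1/2` moves two steps in
the same direction, and gives a loop with `2ρ` sign changes per step that passes through an interval
without fixed points. Two neighbouring points of the cycle that move towards, hence across, each
other give a loop that changes sign at each step. Going around this second loop often enough and
concatenating with copies of the first one realises every ratio `2r` with `ρ < r < 1/2`, and a
periodic point follows the resulting loop. For `r = 1/2`, the same two neighbours give a cycle of
period two.

A map of an interval is clamped to the hull of the given cycle. A periodic orbit on which the
clamped map differs from `f` would run through an end point of the hull, hence be the given cycle.
-/

namespace OverRotation

open Set

/-! ### Orbits and sign changes -/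

section Orbits

variable {α : Type*} {f : α → α} {x : α}

/-- The forward orbit of `x` contains no fixed point of `f`. -/
def NeverFixed (f : α → α) (x : α) : Prop :=
  ∀ i, f (f^[i] x) ≠ f^[i] x

lemma NeverFixed.iterate (h : NeverFixed f x) (n : ℕ) : NeverFixed f (f^[n] x) := fun i ↦ by
  simpa only [← iterate_add_apply] using h (i + n)

lemma mem_periodicPts_of_two_le (hx : 2 ≤ minimalPeriod f x) : x ∈ periodicPts f :=
  minimalPeriod_pos_iff_mem_periodicPts.1 (by omega)

lemma two_le_minimalPeriod_iterate (hx : 2 ≤ minimalPeriod f x) (n : ℕ) :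
    2 ≤ minimalPeriod f (f^[n] x) := by
  rwa [minimalPeriod_apply_iterate (mem_periodicPts_of_two_le hx)]

lemma neverFixed_of_two_le (hx : 2 ≤ minimalPeriod f x) : NeverFixed f x := fun i hi ↦ by
  have h_two := two_le_minimalPeriod_iterate hx i
  rw [minimalPeriod_eq_one_iff_isFixedPt.2 hi] at h_two
  omega

lemma two_le_minimalPeriod {n : ℕ} (hn : 0 < n) (hx : IsPeriodicPt f n x) (hfx : f x ≠ x) :
    2 ≤ minimalPeriod f x := by
  have h_pos := hx.minimalPeriod_pos hn
  have h_ne_one : minimalPeriod f x ≠ 1 := fun h ↦ hfx (minimalPeriod_eq_one_iff_isFixedPt.1 h)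
  omega

lemma exists_iterate_iterate_eq (hx : x ∈ periodicPts f) (i : ℕ) : ∃ n, f^[n] (f^[i] x) = x := by
  obtain ⟨q, hq, hper⟩ := hx
  refine ⟨(q - 1) * i, ?_⟩
  rw [← iterate_add_apply, ← Nat.succ_mul, Nat.succ_eq_add_one, Nat.sub_add_cancel hq]
  exact hper.mul_const i

lemma finite_range_iterate (hx : x ∈ periodicPts f) : (range fun n ↦ f^[n] x).Finite := by
  refine ((finite_Iio (minimalPeriod f x)).image fun n ↦ f^[n] x).subset ?_
  rintro _ ⟨n, rfl⟩
  exact ⟨n % minimalPeriod f x, Nat.mod_lt _ (minimalPeriod_pos_of_mem_periodicPts hx),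
    iterate_mod_minimalPeriod_eq⟩

lemma mapsTo_range_iterate (f : α → α) (x : α) :
    MapsTo f (range fun n ↦ f^[n] x) (range fun n ↦ f^[n] x) := by
  rintro _ ⟨n, rfl⟩
  exact ⟨n + 1, iterate_succ_apply' f n x⟩

lemma iterate_eq_of_eqOn_orbit {g : α → α} (h : ∀ i, g (f^[i] x) = f (f^[i] x)) (n : ℕ) :
    g^[n] x = f^[n] x := by
  induction n with
  | zero => rfl
  | succ n ih => rw [iterate_succ_apply', iterate_succ_apply', ih, h]

lemma minimalPeriod_eq_of_eqOn_orbit {g : α → α} (h : ∀ i, g (f^[i] x) = f (f^[i] x)) :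
    minimalPeriod g x = minimalPeriod f x :=
  minimalPeriod_eq_minimalPeriod_iff.2 fun n ↦ by
    rw [IsPeriodicPt, IsFixedPt, iterate_eq_of_eqOn_orbit h, IsPeriodicPt, IsFixedPt]

end Orbits

section OverCount

variable {f : ℝ → ℝ} {x : ℝ}

@[simp]
lemma overCount_zero (f : ℝ → ℝ) (x : ℝ) : overCount f x 0 = 0 := rfl

lemma overCount_one (f : ℝ → ℝ) (x : ℝ) :
    overCount f x 1 = if (f x - x) * (f (f x) - f x) < 0 then 1 else 0 := by
  simp only [overCount, Finset.card_filter, Finset.sum_range_one, iterate_zero_apply, zero_add,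
    iterate_one]

lemma overCount_add (f : ℝ → ℝ) (x : ℝ) (n m : ℕ) :
    overCount f x (n + m) = overCount f x n + overCount f (f^[n] x) m := by
  simp only [overCount, Finset.card_filter, Finset.sum_range_add]
  congr 1
  refine Finset.sum_congr rfl fun i _ ↦ ?_
  rw [← iterate_add_apply, ← iterate_add_apply, add_comm n, add_right_comm i n]

lemma overCount_le (f : ℝ → ℝ) (x : ℝ) (q : ℕ) : overCount f x q ≤ q :=
  (Finset.card_filter_le _ _).trans (Finset.card_range q).le

lemma overCount_iterate {q : ℕ} (h : IsPeriodicPt f q x) (k : ℕ) :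
    overCount f (f^[k] x) q = overCount f x q := by
  have h_first := overCount_add f x k q
  rw [add_comm, overCount_add, h.eq] at h_first
  omega

lemma overCount_mul {q : ℕ} (h : IsPeriodicPt f q x) (k : ℕ) :
    overCount f x (q * k) = k * overCount f x q := by
  induction k with
  | zero => simp
  | succ k ih => rw [Nat.mul_succ, overCount_add, (h.mul_const k).eq, ih, Nat.succ_mul]

lemma overNum_nonneg (f : ℝ → ℝ) (x : ℝ) : 0 ≤ overNum f x := by
  unfold overNum
  positivity

lemma overNum_le_half (f : ℝ → ℝ) (x : ℝ) : overNum f x ≤ 1 / 2 := by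
  have h_count : (overCount f x (minimalPeriod f x) : ℚ) ≤ minimalPeriod f x :=
    mod_cast overCount_le f x _
  refine div_le_of_le_mul₀ (by positivity) (by norm_num) ?_
  linarith

lemma overNum_iterate (hx : x ∈ periodicPts f) (n : ℕ) : overNum f (f^[n] x) = overNum f x := by
  rw [overNum, overNum, minimalPeriod_apply_iterate hx,
    overCount_iterate (isPeriodicPt_minimalPeriod f x)]

lemma overNum_eq_div {q : ℕ} (hq : 0 < q) (h : IsPeriodicPt f q x) :
    overNum f x = overCount f x q / (2 * q) := by
  obtain ⟨k, rfl⟩ := h.minimalPeriod_dvd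
  have hk : (k : ℚ) ≠ 0 := by
    rintro h_zero
    simp_all
  rw [overNum, overCount_mul (isPeriodicPt_minimalPeriod f x)]
  push_cast
  field_simp

lemma overNum_eq_of_eqOn_orbit {g : ℝ → ℝ} (h : ∀ i, g (f^[i] x) = f (f^[i] x)) :
    overNum g x = overNum f x := by
  simp only [overNum, overCount, minimalPeriod_eq_of_eqOn_orbit h, iterate_eq_of_eqOn_orbit h, h]

lemma iterate_neg_conj (f : ℝ → ℝ) (x : ℝ) (n : ℕ) :
    (fun t ↦ -f (-t))^[n] (-x) = -f^[n] x := by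
  have h_semiconj : Semiconj (fun t : ℝ ↦ -t) f fun t ↦ -f (-t) := fun t ↦ by simp only [neg_neg]
  exact ((h_semiconj.iterate_right n) x).symm

lemma minimalPeriod_neg_conj (f : ℝ → ℝ) (x : ℝ) :
    minimalPeriod (fun t ↦ -f (-t)) (-x) = minimalPeriod f x :=
  minimalPeriod_eq_minimalPeriod_iff.2 fun n ↦ by
    simp only [IsPeriodicPt, IsFixedPt, iterate_neg_conj, neg_inj]

lemma overNum_neg_conj (f : ℝ → ℝ) (x : ℝ) :
    overNum (fun t ↦ -f (-t)) (-x) = overNum f x := by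
  have h_displacement (t : ℝ) : -f (- -t) - -t = -(f t - t) := by rw [neg_neg]; ring
  simp only [overNum, overCount, minimalPeriod_neg_conj, iterate_neg_conj, h_displacement,
    neg_mul_neg]

end OverCount

/-! ### Covering relations -/

section Preimages

lemma eq_of_mem_uIcc_of_dist_le {a b s : ℝ} (hs : s ∈ uIcc a b) (h : dist a b ≤ dist a s) :
    s = b := by
  rw [Real.dist_eq, Real.dist_eq] at h
  rcases mem_uIcc.1 hs with ⟨h₁, h₂⟩ | ⟨h₁, h₂⟩
  · rw [abs_of_nonpos (by linarith), abs_of_nonpos (by linarith)] at h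
    linarith
  · rw [abs_of_nonneg (by linarith), abs_of_nonneg (by linarith)] at h
    linarith

lemma mem_uIcc_or_mem_uIcc_of_notMem {u v y : ℝ} (h : y ∉ uIcc u v) :
    v ∈ uIcc u y ∨ u ∈ uIcc y v := by
  grind [mem_uIcc]

variable {f : ℝ → ℝ}

/-- A preimage pair of `u`, `v` at minimal distance spans an interval that `f` cannot throw outside
`uIcc u v`. -/
lemma exists_uIcc_mapsTo (hf : Continuous f) {p q u v : ℝ} (h : uIcc u v ⊆ uIcc (f p) (f q)) :
    ∃ u' v', uIcc u' v' ⊆ uIcc p q ∧ f u' = u ∧ f v' = v ∧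
      MapsTo f (uIcc u' v') (uIcc u v) := by
  have h_image := h.trans (intermediate_value_uIcc hf.continuousOn)
  obtain ⟨u₀, hu₀, hfu₀⟩ := h_image left_mem_uIcc
  obtain ⟨v₀, hv₀, hfv₀⟩ := h_image right_mem_uIcc
  have h_compact : IsCompact (uIcc p q ×ˢ uIcc p q ∩ {z | f z.1 = u ∧ f z.2 = v}) :=
    (isCompact_uIcc.prod isCompact_uIcc).inter_right <|
      (isClosed_eq (by fun_prop) (by fun_prop)).inter (isClosed_eq (by fun_prop) (by fun_prop))
  obtain ⟨⟨u', v'⟩, ⟨⟨hu', hv'⟩, rfl, rfl⟩, h_min⟩ := h_compact.exists_isMinOn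
    ⟨(u₀, v₀), ⟨hu₀, hv₀⟩, hfu₀, hfv₀⟩ (f := fun z ↦ dist z.1 z.2) (by fun_prop)
  dsimp only at hu' hv' h
  have h_sub : uIcc u' v' ⊆ uIcc p q := uIcc_subset_uIcc hu' hv'
  have h_left (s) (hs : s ∈ uIcc u' v') (hfs : f s = f v') : s = v' :=
    eq_of_mem_uIcc_of_dist_le hs (h_min (a := (u', s)) ⟨⟨hu', h_sub hs⟩, rfl, hfs⟩)
  have h_right (s) (hs : s ∈ uIcc u' v') (hfs : f s = f u') : s = u' := by
    refine eq_of_mem_uIcc_of_dist_le (uIcc_comm u' v' ▸ hs) ?_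
    rw [dist_comm v', dist_comm v']
    exact h_min (a := (s, v')) ⟨⟨h_sub hs, hv'⟩, hfs, rfl⟩
  refine ⟨u', v', h_sub, rfl, rfl, fun y hy ↦ ?_⟩
  by_contra h_out
  rcases mem_uIcc_or_mem_uIcc_of_notMem h_out with hv | hu
  · obtain ⟨s, hs, hfs⟩ := intermediate_value_uIcc hf.continuousOn hv
    obtain rfl := h_left s (uIcc_subset_uIcc_left hy hs) hfs
    have hys : y = s := eq_of_mem_uIcc_of_mem_uIcc' hy hs
    exact h_out (hys ▸ right_mem_uIcc)
  · obtain ⟨s, hs, hfs⟩ := intermediate_value_uIcc hf.continuousOn hu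
    obtain rfl := h_right s (uIcc_subset_uIcc_right hy hs) hfs
    have hys : y = s := eq_of_mem_uIcc_of_mem_uIcc hy hs
    exact h_out (hys ▸ left_mem_uIcc)

end Preimages

section Covers

variable {f : ℝ → ℝ} {n n' m m' : ℕ} {S S' T T' U : Set ℝ}

/-- Every interval in `T` is the image under `f^[n]` of an interval in `S`, endpoints corresponding
to endpoints, and the points of the latter change sign `m` times on the way. Points whose orbit
meets a fixed point are exempt from the count, as the sign of `f y - y` is lost there. -/
def Covers (f : ℝ → ℝ) (S T : Set ℝ) (n m : ℕ) : Prop :=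
  ∀ u v, uIcc u v ⊆ T → ∃ u' v', uIcc u' v' ⊆ S ∧ f^[n] u' = u ∧ f^[n] v' = v ∧
    ∀ y ∈ uIcc u' v', f^[n] y ∈ uIcc u v ∧ (NeverFixed f y → overCount f y n = m)

lemma Covers.refl (f : ℝ → ℝ) (S : Set ℝ) : Covers f S S 0 0 := fun u v huv ↦
  ⟨u, v, huv, rfl, rfl, fun _ hy ↦ ⟨hy, fun _ ↦ rfl⟩⟩

lemma Covers.trans (h : Covers f S T n m) (h' : Covers f T U n' m') :
    Covers f S U (n + n') (m + m') := by
  intro u v huv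
  obtain ⟨u₁, v₁, hT, rfl, rfl, h₁⟩ := h' u v huv
  obtain ⟨u₂, v₂, hS, rfl, rfl, h₂⟩ := h u₁ v₁ hT
  simp only [add_comm n n', iterate_add_apply]
  refine ⟨u₂, v₂, hS, rfl, rfl, fun y hy ↦ ⟨(h₁ _ (h₂ y hy).1).1, fun h_never ↦ ?_⟩⟩
  rw [add_comm, overCount_add, (h₂ y hy).2 h_never, (h₁ _ (h₂ y hy).1).2 (h_never.iterate n)]

lemma Covers.mono (h : Covers f S T n m) (hS : S ⊆ S') (hT : T' ⊆ T) : Covers f S' T' n m := by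
  intro u v huv
  obtain ⟨u', v', h_sub, h_map⟩ := h u v (huv.trans hT)
  exact ⟨u', v', h_sub.trans hS, h_map⟩

/-- The pairs (length, number of sign changes) of the loops at `S` in the covering graph. -/
def loops (f : ℝ → ℝ) (S : Set ℝ) : AddSubmonoid (ℕ × ℕ) where
  carrier := {p | Covers f S S p.1 p.2}
  zero_mem' := Covers.refl f S
  add_mem' := Covers.trans

lemma mem_loops : (n, m) ∈ loops f S ↔ Covers f S S n m := Iff.rfl

lemma Covers.exists_loops (h : Covers f S T n m) (h' : Covers f T S n' m')
    (h_alt : (2, 2) ∈ loops f T) : ∃ a b, ∀ j, (a + 2 * j, b + 2 * j) ∈ loops f S := by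
  refine ⟨n + n', m + m', fun j ↦ mem_loops.2 ?_⟩
  have h_rounds : Covers f T T (j * 2) (j * 2) := nsmul_mem h_alt j
  convert (h.trans h_rounds).trans h' using 1 <;> ring

lemma exists_periodic_of_mem_loops (hf : Continuous f) {l h : ℝ} (hn : 0 < n)
    (h_loop : (n, m) ∈ loops f (uIcc l h)) (h_free : ∀ y ∈ uIcc l h, f y ≠ y) :
    ∃ z, 2 ≤ minimalPeriod f z ∧ IsPeriodicPt f n z ∧ overCount f z n = m := by
  obtain ⟨u, v, h_sub, hu, hv, h_map⟩ := h_loop l h subset_rfl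
  have h_surj : SurjOn f^[n] (uIcc u v) (uIcc u v) := by
    refine h_sub.trans ?_
    simpa only [hu, hv] using intermediate_value_uIcc (hf.iterate n).continuousOn (a := u) (b := v)
  obtain ⟨z, hz, hz_fix⟩ := exists_mem_uIcc_isFixedPt_of_surjOn (hf.iterate n).continuousOn h_surj
  have h_period := two_le_minimalPeriod hn hz_fix (h_free z (h_sub hz))
  exact ⟨z, h_period, hz_fix, (h_map z hz).2 (neverFixed_of_two_le h_period)⟩

lemma exists_mem_ratio_eq {L : AddSubmonoid (ℕ × ℕ)} {ρ : ℚ} {s t : ℕ × ℕ} (hs : s ∈ L)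
    (ht : t ∈ L) (h_slow : s.2 < ρ * s.1) (h_fast : ρ * t.1 ≤ t.2) (ht_pos : 0 < t.1) :
    ∃ n m, 0 < n ∧ (n, m) ∈ L ∧ (m : ℚ) = ρ * n := by
  have h_num : (ρ.num : ℚ) = ρ * ρ.den := (Rat.mul_den_eq_num ρ).symm
  have h_den : (0 : ℚ) < ρ.den := mod_cast ρ.den_pos
  have ha_eq : ((ρ.num * s.1 - ρ.den * s.2 : ℤ) : ℚ) = ρ.den * (ρ * s.1 - s.2) := by
    push_cast
    rw [h_num]
    ring
  have hb_eq : ((ρ.den * t.2 - ρ.num * t.1 : ℤ) : ℚ) = ρ.den * (t.2 - ρ * t.1) := by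
    push_cast
    rw [h_num]
    ring
  have ha : 0 < ρ.num * s.1 - ρ.den * s.2 := by
    rw [← Int.cast_pos (R := ℚ), ha_eq]
    exact mul_pos h_den (sub_pos.2 h_slow)
  have hb : 0 ≤ ρ.den * t.2 - ρ.num * t.1 := by
    rw [← Int.cast_nonneg_iff (R := ℚ), hb_eq]
    exact mul_nonneg h_den.le (sub_nonneg.2 h_fast)
  lift ρ.num * s.1 - ρ.den * s.2 to ℕ using ha.le with a
  lift ρ.den * t.2 - ρ.num * t.1 to ℕ using hb with b
  refine ⟨b * s.1 + a * t.1, b * s.2 + a * t.2, ?_, add_mem (nsmul_mem hs b) (nsmul_mem ht a), ?_⟩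
  · have := Nat.mul_pos (Int.natCast_pos.1 ha) ht_pos
    omega
  · push_cast at ha_eq hb_eq ⊢
    rw [ha_eq, hb_eq]
    ring

/-- Adding `(2, 2)` repeatedly pushes the ratio of a pair towards `1`. -/
lemma exists_ratio_le {ρ : ℚ} (hρ : ρ < 1) (l k : ℕ) :
    ∃ j : ℕ, 0 < l + 2 * j ∧ ρ * (l + 2 * j : ℕ) ≤ (k + 2 * j : ℕ) := by
  obtain ⟨j, hj⟩ := exists_nat_gt ((ρ * l - k) / (2 * (1 - ρ)))
  rw [div_lt_iff₀ (by linarith)] at hj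
  refine ⟨j + 1, by omega, ?_⟩
  push_cast
  linarith

/-- Concatenating loops with too few sign changes and loops that change sign almost always gives
any ratio in between. -/
lemma exists_overNum_eq_of_slow_of_fast (hf : Continuous f) {l h : ℝ} {r : ℚ} {q p a b : ℕ}
    (h_free : ∀ y ∈ uIcc l h, f y ≠ y) (hr : r < 1 / 2) (h_slow : (q, p) ∈ loops f (uIcc l h))
    (h_ratio : (p : ℚ) < 2 * r * q) (h_fast : ∀ j, (a + 2 * j, b + 2 * j) ∈ loops f (uIcc l h)) :
    ∃ z, 2 ≤ minimalPeriod f z ∧ overNum f z = r := by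
  obtain ⟨j, hj_pos, hj⟩ := exists_ratio_le (ρ := 2 * r) (by linarith) a b
  obtain ⟨n, m, hn, h_loop, h_eq⟩ := exists_mem_ratio_eq h_slow (h_fast j) h_ratio hj hj_pos
  obtain ⟨z, hz, hz_per, hz_count⟩ := exists_periodic_of_mem_loops hf hn h_loop h_free
  refine ⟨z, hz, ?_⟩
  rw [overNum_eq_div hn hz_per, hz_count, h_eq]
  field_simp

end Covers

/-! ### Orbit points paired with fixed points -/

section Vertices

variable {f : ℝ → ℝ} {x y e e' : ℝ}

lemma exists_mem_uIcc_isFixedPt_of_mul_nonpos (hf : Continuous f)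
    (h : (f x - x) * (f y - y) ≤ 0) : ∃ t ∈ uIcc x y, f t = t := by
  rcases mul_nonpos_iff.1 h with ⟨hx, hy⟩ | ⟨hx, hy⟩
  · exact exists_mem_uIcc_isFixedPt hf.continuousOn (sub_nonneg.1 hx) (sub_nonpos.1 hy)
  · rw [uIcc_comm]
    exact exists_mem_uIcc_isFixedPt hf.continuousOn (sub_nonneg.1 hy) (sub_nonpos.1 hx)

/-- `e` is the fixed point of `f` nearest to the non-fixed point `x` on one side. The intervals
`uIcc x e`, for `x` in an orbit, are the vertices of the covering graph. -/
structure IsVertex (f : ℝ → ℝ) (x e : ℝ) : Prop where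
  fixed : f e = e
  not_fixed : f x ≠ x
  eq_of_fixed : ∀ y ∈ uIcc x e, f y = y → y = e

lemma exists_isVertex (hf : Continuous f) {c : ℝ} (hx : f x ≠ x) (hc : f c = c) :
    ∃ e ∈ uIcc x c, IsVertex f x e := by
  have h_compact : IsCompact (uIcc x c ∩ {y | f y = y}) :=
    isCompact_uIcc.inter_right (isClosed_eq hf continuous_id)
  obtain ⟨e, ⟨he, he_fix⟩, h_min⟩ := h_compact.exists_isMinOn ⟨c, right_mem_uIcc, hc⟩
    (f := fun y ↦ dist x y) (by fun_prop)
  exact ⟨e, he, he_fix, hx, fun y hy hfy ↦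
    eq_of_mem_uIcc_of_dist_le hy (h_min ⟨uIcc_subset_uIcc_left he hy, hfy⟩)⟩

lemma IsVertex.ne (h : IsVertex f x e) : e ≠ x := by
  rintro rfl
  exact h.not_fixed h.fixed

lemma IsVertex.sub_mul_sub_pos (hf : Continuous f) (h : IsVertex f x e) (hy : y ∈ uIcc x e)
    (hfy : f y ≠ y) : 0 < (f x - x) * (f y - y) := by
  by_contra! h_nonpos
  obtain ⟨t, ht, hft⟩ := exists_mem_uIcc_isFixedPt_of_mul_nonpos hf h_nonpos
  obtain rfl := h.eq_of_fixed t (uIcc_subset_uIcc_left hy ht) hft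
  exact hfy (eq_of_mem_uIcc_of_mem_uIcc' hy ht ▸ h.fixed)

/-- `f` moves `x` in the direction of `e`. -/
def Toward (f : ℝ → ℝ) (x e : ℝ) : Prop := 0 < (f x - x) * (e - x)

lemma toward_of_lt (hx : f x < x) (he : e < x) : Toward f x e :=
  mul_pos_of_neg_of_neg (sub_neg.2 hx) (sub_neg.2 he)

lemma IsVertex.eq_of_toward (h : IsVertex f x e) (h' : IsVertex f x e') (ht : Toward f x e)
    (ht' : Toward f x e') : e = e' := by
  have h_nested : e ∈ uIcc x e' ∨ e' ∈ uIcc x e := by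
    simp only [Toward, mul_pos_iff, sub_pos, sub_neg] at ht ht'
    grind [mem_uIcc]
  rcases h_nested with he | he
  · exact h'.eq_of_fixed e he h.fixed
  · exact (h.eq_of_fixed e' he h'.fixed).symm

/-- The sign of `f y - y` does not change along a vertex, so every point crossing from one vertex
to another sees the sign change of the two end points. -/
lemma IsVertex.covers (hf : Continuous f) (hx : IsVertex f x e) (hy : IsVertex f y e') {p q : ℝ}
    (h_sub : uIcc p q ⊆ uIcc x e) (h_cover : uIcc y e' ⊆ uIcc (f p) (f q)) :
    Covers f (uIcc p q) (uIcc y e') 1 (if (f x - x) * (f y - y) < 0 then 1 else 0) := by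
  intro u v huv
  obtain ⟨u', v', h_sub', hu, hv, h_maps⟩ := exists_uIcc_mapsTo hf (huv.trans h_cover)
  refine ⟨u', v', h_sub', hu, hv, fun t ht ↦ ⟨h_maps ht, fun h_never ↦ ?_⟩⟩
  have h_first := hx.sub_mul_sub_pos hf (h_sub (h_sub' ht)) (h_never 0)
  have h_second := hy.sub_mul_sub_pos hf (huv (h_maps ht)) (h_never 1)
  have h_same : 0 < (f t - t) * (f (f t) - f t) * ((f x - x) * (f y - y)) := by
    rw [mul_mul_mul_comm, mul_comm (f t - t), mul_comm (f (f t) - f t)]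
    exact mul_pos h_first h_second
  simp only [overCount_one, neg_iff_neg_of_mul_pos h_same]

lemma IsVertex.covers_apply (hf : Continuous f) (hx : IsVertex f x e)
    (hy : IsVertex f (f x) e') (he : e' ∈ uIcc (f x) e) :
    Covers f (uIcc x e) (uIcc (f x) e') 1 (overCount f x 1) := by
  rw [overCount_one]
  refine hx.covers hf hy subset_rfl ?_
  rw [hx.fixed]
  exact uIcc_subset_uIcc_left he

/-- Right after a sign change, `f x` has been thrown across `e'` and comes back. -/
lemma IsVertex.toward_apply (hf : Continuous f) (hx : IsVertex f x e) (hy : IsVertex f (f x) e')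
    (he : e' ∈ uIcc (f x) e) (h_sign : (f x - x) * (f (f x) - f x) < 0) : Toward f (f x) e' := by
  have h_notMem : f x ∉ uIcc x e := fun h ↦ (hx.sub_mul_sub_pos hf h hy.not_fixed).not_gt h_sign
  have h_ne := hy.ne
  simp only [Toward, mul_pos_iff, mul_neg_iff, sub_pos, sub_neg] at h_sign ⊢
  grind [mem_uIcc]

lemma IsVertex.exists_covers_iterate (hf : Continuous f) (hx : IsVertex f x e)
    (h_never : NeverFixed f x) (n : ℕ) : ∃ e', IsVertex f (f^[n] x) e' ∧
      Covers f (uIcc x e) (uIcc (f^[n] x) e') n (overCount f x n) := by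
  induction n with
  | zero => exact ⟨e, hx, Covers.refl f _⟩
  | succ n ih =>
    obtain ⟨e₁, he₁, h_path⟩ := ih
    have h_not_fixed := h_never (n + 1)
    rw [iterate_succ_apply'] at h_not_fixed
    obtain ⟨e₂, he₂, h_vertex⟩ := exists_isVertex hf h_not_fixed he₁.fixed
    refine ⟨e₂, by rwa [iterate_succ_apply'], ?_⟩
    rw [iterate_succ_apply', overCount_add]
    exact h_path.trans (he₁.covers_apply hf h_vertex he₂)

lemma IsVertex.covers_apply_of_toward (hf : Continuous f) (hx : IsVertex f x e)
    (hy : IsVertex f (f x) e') (ht : Toward f (f x) e')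
    (h_sign : (f x - x) * (f (f x) - f x) < 0) :
    Covers f (uIcc x e) (uIcc (f x) e') 1 (overCount f x 1) := by
  obtain ⟨e₁, he₁, h_vertex⟩ := exists_isVertex hf hy.not_fixed hx.fixed
  obtain rfl := h_vertex.eq_of_toward hy (hx.toward_apply hf h_vertex he₁ h_sign) ht
  exact hx.covers_apply hf hy he₁

end Vertices

/-! ### Loops through the orbit -/

section Loops

variable {f : ℝ → ℝ} {w v e e' κ : ℝ}

lemma exists_adjacent_exchanged {α : Type*} [LinearOrder α] {f : α → α} {O : Set α} {w v : α}
    (hO : O.Finite) (h_maps : MapsTo f O O) (h_free : ∀ y ∈ O, f y ≠ y) (hw : w ∈ O)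
    (hv : v ∈ O) (h_up : w < f w) (h_down : f v < v) (hwv : w < v) :
    ∃ x ∈ O, ∃ y ∈ O, w ≤ x ∧ x < y ∧ y ≤ v ∧ y ≤ f x ∧ f y ≤ x := by
  obtain ⟨x, ⟨hxO, hxv, hx_up⟩, hx_max⟩ :=
    exists_max_image {x ∈ O | x ≤ v ∧ x < f x} id (hO.sep _) ⟨w, hw, hwv.le, h_up⟩
  have hxv : x < v := hxv.lt_of_ne (by rintro rfl; exact hx_up.not_gt h_down)
  obtain ⟨y, ⟨hyO, hxy⟩, hy_min⟩ :=
    exists_min_image {y ∈ O | x < y} id (hO.sep _) ⟨v, hv, hxv⟩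
  simp only [id, mem_ofPred_eq, and_imp] at hx_max hy_min
  have hyv : y ≤ v := hy_min v hv hxv
  have hy_down : f y < y := (h_free y hyO).lt_of_le <| not_lt.1 fun hy_up ↦
    (hx_max y hyO hyv hy_up).not_gt hxy
  refine ⟨x, hxO, y, hyO, hx_max w hw hwv.le h_up, hxy, hyv, hy_min _ (h_maps hxO) hx_up, ?_⟩
  by_contra! h_gt
  exact (hy_min _ (h_maps hyO) h_gt).not_gt hy_down

/-- The points `x < y` of `exists_adjacent_exchanged`, paired with fixed points between them, cover
each other with one sign change each time. -/
lemma exists_alternating_loop (hf : Continuous f) {O : Set ℝ} (hO : O.Finite)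
    (h_maps : MapsTo f O O) (h_free : ∀ y ∈ O, f y ≠ y) (hw : w ∈ O) (hv : v ∈ O)
    (h_up : w < f w) (h_down : f v < v) (hwv : w < v) :
    ∃ y ∈ O, ∃ e, w ≤ e ∧ e ≤ y ∧ y ≤ v ∧ IsVertex f y e ∧ (2, 2) ∈ loops f (uIcc y e) := by
  obtain ⟨x, hxO, y, hyO, hwx, hxy, hyv, hyx, hxy'⟩ :=
    exists_adjacent_exchanged hO h_maps h_free hw hv h_up h_down hwv
  have h_sign : (f x - x) * (f y - y) < 0 := mul_neg_of_pos_of_neg (by linarith) (by linarith)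
  obtain ⟨c, hc, hfc⟩ := exists_mem_uIcc_isFixedPt_of_mul_nonpos hf h_sign.le
  rw [uIcc_of_le hxy.le] at hc
  obtain ⟨e₁, he₁, hx_vertex⟩ := exists_isVertex hf (h_free x hxO) hfc
  obtain ⟨e₂, he₂, hy_vertex⟩ := exists_isVertex hf (h_free y hyO) hfc
  rw [uIcc_of_le hc.1] at he₁
  rw [uIcc_of_ge hc.2] at he₂
  have h_le : e₁ ≤ e₂ := he₁.2.trans he₂.1
  have hyx_covers := hy_vertex.covers hf hx_vertex subset_rfl <| by
    rw [hy_vertex.fixed]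
    exact uIcc_subset_uIcc (Icc_subset_uIcc ⟨hxy', he₁.1.trans h_le⟩)
      (Icc_subset_uIcc ⟨hxy'.trans he₁.1, h_le⟩)
  have hxy_covers := hx_vertex.covers hf hy_vertex subset_rfl <| by
    rw [hx_vertex.fixed]
    exact uIcc_subset_uIcc (Icc_subset_uIcc' ⟨h_le.trans he₂.2, hyx⟩)
      (Icc_subset_uIcc' ⟨h_le, he₂.2.trans hyx⟩)
  rw [mul_comm, if_pos h_sign] at hyx_covers
  rw [if_pos h_sign] at hxy_covers
  exact ⟨y, hyO, e₂, hwx.trans (he₁.1.trans h_le), he₂.2, hyv, hy_vertex,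
    hyx_covers.trans hxy_covers⟩

lemma exists_covers_alternating_loop (hf : Continuous f) (hw : 2 ≤ minimalPeriod f w)
    (h_up : w < f w) (h_down : f (f w) < f w) (hκ : IsVertex f (f w) κ) (hκ_lt : κ < f w) :
    ∃ T n m n' m', Covers f (uIcc (f w) κ) T n m ∧ Covers f T (uIcc (f w) κ) n' m' ∧
      (2, 2) ∈ loops f T := by
  have h_per := mem_periodicPts_of_two_le hw
  have h_never := neverFixed_of_two_le hw
  obtain ⟨y, ⟨i, hi⟩, e₂, hwe₂, he₂y, hyv, hy, h_alt⟩ :=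
    exists_alternating_loop hf (finite_range_iterate h_per) (mapsTo_range_iterate f w)
      (forall_mem_range.2 h_never) ⟨0, rfl⟩ ⟨1, rfl⟩ h_up h_down h_up
  obtain ⟨n₁, hn₁⟩ := exists_iterate_iterate_eq h_per 1
  obtain ⟨e, he, h_path₁⟩ := hκ.exists_covers_iterate hf (h_never.iterate 1) n₁
  obtain ⟨n₂, hn₂⟩ := exists_iterate_iterate_eq h_per i
  obtain ⟨e₃, he₃, h_path₂⟩ := hy.exists_covers_iterate hf (hi ▸ h_never.iterate i) n₂
  rw [iterate_one] at hn₁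
  rw [hn₁] at he h_path₁
  rw [← hi, hn₂] at he₃ h_path₂
  have he_le : e ≤ e₂ := by
    by_contra! h_gt
    exact h_gt.ne (he.eq_of_fixed e₂ (Icc_subset_uIcc ⟨hwe₂, h_gt.le⟩) hy.fixed)
  have h_enter := he.covers hf hy subset_rfl <| by
    rw [he.fixed]
    exact uIcc_subset_uIcc (Icc_subset_uIcc' ⟨he_le.trans he₂y, hyv⟩)
      (Icc_subset_uIcc' ⟨he_le, he₂y.trans hyv⟩)
  have h_return := he₃.covers_apply_of_toward hf hκ (toward_of_lt h_down hκ_lt)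
    (mul_neg_of_pos_of_neg (sub_pos.2 h_up) (sub_neg.2 h_down))
  exact ⟨_, _, _, _, _, h_path₁.trans h_enter, (hi ▸ h_path₂).trans h_return, h_alt⟩

/-- If the vertex of `w` lies behind `w`, then the part of it thrown onto `uIcc (f w) κ` misses
`e`. -/
lemma IsVertex.exists_free_of_lt (hf : Continuous f) (hw : IsVertex f w e)
    (hκ : IsVertex f (f w) κ) (hew : e < w) (hwκ : w ≤ κ) (hκ_lt : κ < f w) :
    ∃ d, uIcc w d ⊆ uIcc w e ∧ (∀ y ∈ uIcc w d, f y ≠ y) ∧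
      Covers f (uIcc w d) (uIcc (f w) κ) 1 (overCount f w 1) := by
  obtain ⟨d, hd, hfd⟩ := intermediate_value_Icc hew.le hf.continuousOn
    (show κ ∈ Icc (f e) (f w) by rw [hw.fixed]; exact ⟨by linarith, hκ_lt.le⟩)
  have h_sub : uIcc w d ⊆ uIcc w e := uIcc_subset_uIcc_left (Icc_subset_uIcc' hd)
  have hed : e < d := hd.1.lt_of_ne (by rintro rfl; linarith [hw.fixed])
  refine ⟨d, h_sub, fun y hy hfy ↦ ?_, ?_⟩
  · rw [hw.eq_of_fixed y (h_sub hy) hfy, uIcc_of_ge hd.2] at hy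
    exact hed.not_ge hy.1
  · rw [overCount_one]
    exact hw.covers hf hκ h_sub (by rw [hfd])

lemma IsVertex.exists_free_of_gt (hf : Continuous f) (hw : IsVertex f w e')
    (hfw : IsVertex f (f w) e) (he : e ∈ uIcc (f w) e') (h_up : w < f w) (h_lt : f w < e)
    (h_up' : f w < f (f w)) (h_down : f (f (f w)) < f (f w)) :
    uIcc w (f w) ⊆ uIcc w e' ∧ (∀ y ∈ uIcc w (f w), f y ≠ y) ∧
      Covers f (uIcc w (f w)) (uIcc (f w) e) 1 (overCount f w 1) := by
  have h_le : e ≤ e' := by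
    rcases mem_uIcc.1 he with he | he
    · exact he.2
    · linarith
  obtain rfl : e = e' :=
    hw.eq_of_fixed e (Icc_subset_uIcc ⟨(h_up.trans h_lt).le, h_le⟩) hfw.fixed
  have h_sub : uIcc w (f w) ⊆ uIcc w e :=
    uIcc_subset_uIcc_left (Icc_subset_uIcc ⟨h_up.le, h_lt.le⟩)
  have hev : e ≤ f (f w) := by
    by_contra! h_gt
    have h_pos := hfw.sub_mul_sub_pos hf (Icc_subset_uIcc ⟨h_up'.le, h_gt.le⟩) h_down.ne
    exact h_pos.not_gt (mul_neg_of_pos_of_neg (sub_pos.2 h_up') (sub_neg.2 h_down))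
  refine ⟨h_sub, fun y hy hfy ↦ ?_, ?_⟩
  · rw [hw.eq_of_fixed y (h_sub hy) hfy, uIcc_of_le h_up.le] at hy
    exact h_lt.not_ge hy.2
  · rw [overCount_one]
    exact hw.covers hf hfw h_sub (uIcc_subset_uIcc_left (Icc_subset_uIcc ⟨h_lt.le, hev⟩))

/-- The loop `f (f w) → ⋯ → w → f w → f (f w)` of the whole cycle passes through an interval that
contains no fixed point and sits either at `f w` or between `w` and `f w`. -/
lemma exists_free_loop (hf : Continuous f) (hw : 2 ≤ minimalPeriod f w) (h_up : w < f w)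
    (h_up' : f w < f (f w)) (h_down : f (f (f w)) < f (f w)) (hκ : IsVertex f (f (f w)) κ)
    (hwκ : f w ≤ κ) (hκ_lt : κ < f (f w)) :
    ∃ l h n m n' m', (∀ y ∈ uIcc l h, f y ≠ y) ∧ Covers f (uIcc l h) (uIcc (f (f w)) κ) n m ∧
      Covers f (uIcc (f (f w)) κ) (uIcc l h) n' m' ∧ 0 < n + n' ∧ IsPeriodicPt f (n + n') w ∧
      overCount f w (n + n') = m + m' := by
  have h_never := neverFixed_of_two_le hw
  obtain ⟨t, ht⟩ := exists_iterate_iterate_eq (mem_periodicPts_of_two_le hw) 2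
  obtain ⟨e', he', h_path⟩ := hκ.exists_covers_iterate hf (h_never.iterate 2) t
  have h_per : IsPeriodicPt f (t + 2) w := by rwa [IsPeriodicPt, IsFixedPt, iterate_add_apply]
  have h_count : overCount f w (t + 2) =
      overCount f w 1 + overCount f (f w) 1 + overCount f (f (f w)) t := by
    rw [add_comm t, overCount_add, ← one_add_one_eq_two, overCount_add]
    rfl
  change f^[t] (f (f w)) = w at ht
  rw [ht] at he' h_path
  obtain ⟨e, he, h_vertex⟩ := exists_isVertex hf h_up'.ne' he'.fixed
  rcases h_vertex.ne.lt_or_gt with h_lt | h_gt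
  · obtain ⟨d, h_sub, h_free, h_last⟩ := h_vertex.exists_free_of_lt hf hκ h_lt hwκ hκ_lt
    refine ⟨f w, d, 1, _, t + 1, _, h_free, h_last,
      (h_path.trans (he'.covers_apply hf h_vertex he)).mono subset_rfl h_sub, by omega, ?_, ?_⟩
    · rwa [add_left_comm]
    · rw [add_left_comm, one_add_one_eq_two, h_count]
      ring
  · obtain ⟨h_sub, h_free, h_first⟩ :=
      he'.exists_free_of_gt hf h_vertex he h_up h_gt h_up' h_down
    have h_last := h_vertex.covers_apply_of_toward hf hκ (toward_of_lt h_down hκ_lt)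
      (mul_neg_of_pos_of_neg (sub_pos.2 h_up') (sub_neg.2 h_down))
    refine ⟨w, f w, 1 + 1, _, t, _, h_free, h_first.trans h_last,
      h_path.mono subset_rfl h_sub, by omega, ?_, ?_⟩
    · rwa [add_comm]
    · rw [add_comm, one_add_one_eq_two, h_count]

lemma exists_overNum_eq_of_up_up_down (hf : Continuous f) (hw : 2 ≤ minimalPeriod f w)
    (h_up : w < f w) (h_up' : f w < f (f w)) (h_down : f (f (f w)) < f (f w)) {r : ℚ}
    (hr : overNum f w < r) (hr' : r < 1 / 2) : ∃ z, 2 ≤ minimalPeriod f z ∧ overNum f z = r := by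
  obtain ⟨c, hc, hfc⟩ := exists_mem_uIcc_isFixedPt_of_mul_nonpos hf
    (mul_neg_of_pos_of_neg (sub_pos.2 h_up') (sub_neg.2 h_down)).le
  obtain ⟨κ, hκ, h_vertex⟩ := exists_isVertex hf h_down.ne hfc
  rw [uIcc_of_le h_up'.le] at hc
  rw [uIcc_of_ge hc.2] at hκ
  have hκ_lt : κ < f (f w) := hκ.2.lt_of_ne h_vertex.ne
  obtain ⟨T, _, _, _, _, h_to, h_from, h_alt⟩ := exists_covers_alternating_loop hf
    (two_le_minimalPeriod_iterate hw 1) h_up' h_down h_vertex hκ_lt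
  obtain ⟨l, h, n, m, n', m', h_free, h_out, h_back, h_pos, h_per, h_count⟩ :=
    exists_free_loop hf hw h_up h_up' h_down h_vertex (hc.1.trans hκ.1) hκ_lt
  obtain ⟨a, b, h_fast⟩ := (h_out.trans h_to).exists_loops (h_from.trans h_back) h_alt
  refine exists_overNum_eq_of_slow_of_fast hf h_free hr' (h_out.trans h_back) ?_ h_fast
  rw [overNum_eq_div h_pos h_per, div_lt_iff₀ (by positivity), h_count] at hr
  linarith

end Loops

/-! ### Cycles of continuous maps of the line -/

section Line

lemma exists_up_up_down {α : Type*} [LinearOrder α] {f : α → α} {x : α}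
    (hx : 2 ≤ minimalPeriod f x) (h_up : x < f x) (h_up' : f x < f (f x)) :
    ∃ i, f^[i] x < f (f^[i] x) ∧ f (f^[i] x) < f (f (f^[i] x)) ∧
      f (f (f (f^[i] x))) < f (f (f^[i] x)) := by
  by_contra! h_none
  have h_always_up (n : ℕ) : f^[n] x < f (f^[n] x) ∧ f (f^[n] x) < f (f (f^[n] x)) := by
    induction n with
    | zero => exact ⟨h_up, h_up'⟩
    | succ n ih =>
      have h_le := h_none n ih.1 ih.2
      have h_ne := neverFixed_of_two_le hx (n + 2)
      simp only [iterate_succ_apply'] at h_ne ⊢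
      exact ⟨ih.2, h_le.lt_of_ne h_ne.symm⟩
  have h_mono : StrictMono fun n ↦ f^[n] x := strictMono_nat_of_lt_succ fun n ↦ by
    simpa only [iterate_succ_apply'] using (h_always_up n).1
  have h_lt := h_mono (a := 0) (b := minimalPeriod f x) (by omega)
  exact h_lt.ne iterate_minimalPeriod.symm

variable {f : ℝ → ℝ} {x : ℝ} {r : ℚ}

lemma exists_overNum_eq_of_up_up (hf : Continuous f) (hx : 2 ≤ minimalPeriod f x)
    (h_up : x < f x) (h_up' : f x < f (f x)) (hr : overNum f x < r) (hr' : r < 1 / 2) :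
    ∃ z, 2 ≤ minimalPeriod f z ∧ overNum f z = r := by
  obtain ⟨i, h₁, h₂, h₃⟩ := exists_up_up_down hx h_up h_up'
  rw [← overNum_iterate (mem_periodicPts_of_two_le hx) i] at hr
  exact exists_overNum_eq_of_up_up_down hf (two_le_minimalPeriod_iterate hx i) h₁ h₂ h₃ hr hr'

lemma exists_mul_pos_of_overNum_lt_half (hx : 2 ≤ minimalPeriod f x) (h : overNum f x < 1 / 2) :
    ∃ i, 0 < (f (f^[i] x) - f^[i] x) * (f (f^[i + 1] x) - f^[i + 1] x) := by
  by_contra! h_nonpos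
  have h_never := neverFixed_of_two_le hx
  have h_count : overCount f x (minimalPeriod f x) = minimalPeriod f x := by
    rw [overCount, Finset.filter_true_of_mem, Finset.card_range]
    exact fun i _ ↦ (h_nonpos i).lt_of_ne <|
      mul_ne_zero (sub_ne_zero.2 (h_never i)) (sub_ne_zero.2 (h_never (i + 1)))
  have h_pos : (0 : ℚ) < minimalPeriod f x := mod_cast by omega
  rw [overNum, h_count, div_lt_iff₀ (by positivity)] at h
  linarith

lemma exists_overNum_eq_of_lt_half (hf : Continuous f) (hx : 2 ≤ minimalPeriod f x)
    (hr : overNum f x < r) (hr' : r < 1 / 2) : ∃ z, 2 ≤ minimalPeriod f z ∧ overNum f z = r := by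
  obtain ⟨i, hi⟩ := exists_mul_pos_of_overNum_lt_half hx (hr.trans hr')
  rw [← overNum_iterate (mem_periodicPts_of_two_le hx) i] at hr
  replace hx := two_le_minimalPeriod_iterate hx i
  rw [iterate_succ_apply'] at hi
  rcases pos_and_pos_or_neg_and_neg_of_mul_pos hi with ⟨h_up, h_up'⟩ | ⟨h_down, h_down'⟩
  · exact exists_overNum_eq_of_up_up hf hx (sub_pos.1 h_up) (sub_pos.1 h_up') hr hr'
  · rw [← minimalPeriod_neg_conj] at hx
    rw [← overNum_neg_conj] at hr
    obtain ⟨z, hz, rfl⟩ := exists_overNum_eq_of_up_up (f := fun t ↦ -f (-t)) (by fun_prop) hx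
      (by simpa using h_down) (by simpa using h_down') hr hr'
    refine ⟨-z, ?_, ?_⟩
    · rwa [← minimalPeriod_neg_conj, neg_neg]
    · rw [← overNum_neg_conj, neg_neg]

lemma overNum_eq_half (hx : f x ≠ x) (hx' : f (f x) = x) : overNum f x = 1 / 2 := by
  have h_neg : (f x - x) * (x - f x) < 0 := by
    have := sq_pos_of_ne_zero (sub_ne_zero.2 hx)
    linarith
  have h_count : overCount f x 2 = 2 := by
    rw [← one_add_one_eq_two, overCount_add, overCount_one, iterate_one, overCount_one, hx',
      if_pos h_neg, if_pos (mul_comm (f x - x) _ ▸ h_neg)]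
  rw [overNum_eq_div two_pos hx', h_count]
  norm_num

/-- On an interval `Icc y s` without fixed points, a fixed point of `f ∘ f` lies on a 2-cycle. -/
lemma exists_two_cycle {m s : ℝ} (hf : Continuous f) (hms : m ≤ s) (hm : m ≤ f (f m))
    (hs : s < f s) (hs' : f (f s) ≤ s) : ∃ z, f z ≠ z ∧ f (f z) = z := by
  obtain ⟨y, hys, h_free, hy⟩ : ∃ y ≤ s, (∀ z ∈ Icc y s, f z ≠ z) ∧ y ≤ f (f y) := by
    by_cases h_fixed : ∃ c ∈ Icc m s, f c = c
    · obtain ⟨c, hc, hfc⟩ := h_fixed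
      obtain ⟨d, hd, h_vertex⟩ := exists_isVertex hf hs.ne' hfc
      rw [uIcc_of_ge hc.2] at hd
      obtain ⟨y, hy, hfy⟩ := intermediate_value_Icc hd.2 hf.continuousOn
        (show s ∈ Icc (f d) (f s) by rw [h_vertex.fixed]; exact ⟨hd.2, hs.le⟩)
      refine ⟨y, hy.2, fun z hz hfz ↦ ?_, by rw [hfy]; exact hy.2.trans hs.le⟩
      have hzd := h_vertex.eq_of_fixed z (Icc_subset_uIcc' ⟨hy.1.trans hz.1, hz.2⟩) hfz
      obtain rfl : y = d := le_antisymm (hzd ▸ hz.1) hy.1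
      exact h_vertex.ne (h_vertex.fixed.symm.trans hfy)
    · push Not at h_fixed
      exact ⟨m, hms, h_fixed, hm⟩
  obtain ⟨z, hz, hfz⟩ :=
    exists_mem_uIcc_isFixedPt (f := fun t ↦ f (f t)) (by fun_prop) hy hs'
  rw [uIcc_of_le hys] at hz
  exact ⟨z, h_free z hz, hfz⟩

lemma exists_overNum_eq_half (hf : Continuous f) (hx : 2 ≤ minimalPeriod f x) :
    ∃ z, 2 ≤ minimalPeriod f z ∧ overNum f z = 1 / 2 := by
  set O := range fun n ↦ f^[n] x
  have hO : O.Finite := finite_range_iterate (mem_periodicPts_of_two_le hx)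
  have h_maps : MapsTo f O O := mapsTo_range_iterate f x
  have h_free : ∀ y ∈ O, f y ≠ y := forall_mem_range.2 (neverFixed_of_two_le hx)
  obtain ⟨m, hmO, hm⟩ := exists_min_image O id hO ⟨x, 0, rfl⟩
  obtain ⟨M, hMO, hM⟩ := exists_max_image O id hO ⟨x, 0, rfl⟩
  have h_up : m < f m := (hm _ (h_maps hmO)).lt_of_ne (h_free m hmO).symm
  have h_down : f M < M := (hM _ (h_maps hMO)).lt_of_ne (h_free M hMO)
  obtain ⟨p, -, q, -, hmp, hpq, -, hqp, hqp'⟩ :=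
    exists_adjacent_exchanged hO h_maps h_free hmO hMO h_up h_down
      (h_up.trans_le (hM _ (h_maps hmO)))
  obtain ⟨c, hc, hfc⟩ := exists_mem_uIcc_isFixedPt hf.continuousOn (hpq.le.trans hqp)
    (hqp'.trans hpq.le)
  rw [uIcc_of_le hpq.le] at hc
  have hcq : c < q := hc.2.lt_of_ne (by rintro rfl; linarith [hfc.eq])
  obtain ⟨s, hs, rfl⟩ := intermediate_value_Icc' hc.1 hf.continuousOn
    (show q ∈ Icc (f c) (f p) by rw [hfc]; exact ⟨hc.2, hqp⟩)
  obtain ⟨z, hz, hz'⟩ := exists_two_cycle hf (hmp.trans hs.1) (hm _ (h_maps (h_maps hmO)))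
    (hs.2.trans_lt hcq) (hqp'.trans hs.1)
  exact ⟨z, two_le_minimalPeriod two_pos hz' hz, overNum_eq_half hz hz'⟩

theorem exists_overNum_eq (hf : Continuous f) (hx : 2 ≤ minimalPeriod f x) (hr : overNum f x < r)
    (hr' : r ≤ 1 / 2) : ∃ z, 2 ≤ minimalPeriod f z ∧ overNum f z = r := by
  rcases hr'.lt_or_eq with h_lt | rfl
  · exact exists_overNum_eq_of_lt_half hf hx hr h_lt
  · exact exists_overNum_eq_half hf hx

end Line

/-! ### Maps of an interval -/

section Truncation

variable {f : ℝ → ℝ} {a b x y : ℝ} {h : a ≤ b}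

/-- The map `f` with argument and value clamped to `Icc a b`. It is a self-map of the line as
continuous as `f` is on `Icc a b`, and agrees with `f` as long as `f` stays in `Icc a b`. -/
noncomputable def truncate (f : ℝ → ℝ) (h : a ≤ b) (t : ℝ) : ℝ :=
  projIcc a b h (f (projIcc a b h t))

lemma continuous_truncate (hf : ContinuousOn f (Icc a b)) : Continuous (truncate f h) := by
  have h_proj : Continuous fun t ↦ (projIcc a b h t : ℝ) :=
    continuous_subtype_val.comp continuous_projIcc
  exact h_proj.comp (hf.comp_continuous h_proj fun t ↦ (projIcc a b h t).2)

lemma truncate_mem (f : ℝ → ℝ) (h : a ≤ b) (t : ℝ) : truncate f h t ∈ Icc a b :=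
  (projIcc a b h _).2

lemma truncate_of_mem (hx : x ∈ Icc a b) : truncate f h x = projIcc a b h (f x) := by
  rw [truncate, projIcc_of_mem h hx]

lemma truncate_eq (hx : x ∈ Icc a b) (hfx : f x ∈ Icc a b) : truncate f h x = f x := by
  rw [truncate_of_mem hx, projIcc_of_mem h hfx]

lemma truncate_eq_or (hx : x ∈ Icc a b) :
    truncate f h x = f x ∨ truncate f h x = a ∨ truncate f h x = b := by
  rw [truncate_of_mem hx]
  rcases le_total (f x) a with ha | ha
  · rw [projIcc_of_le_left h ha]
    exact .inr (.inl rfl)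
  rcases le_total b (f x) with hb | hb
  · rw [projIcc_of_right_le h hb]
    exact .inr (.inr rfl)
  · rw [projIcc_of_mem h ⟨ha, hb⟩]
    exact .inl rfl

lemma iterate_truncate_mem (hy : y ∈ periodicPts (truncate f h)) (n : ℕ) :
    (truncate f h)^[n] y ∈ Icc a b := by
  obtain ⟨k, hk⟩ := exists_iterate_iterate_eq hy (n + 1)
  rw [← hk, ← iterate_add_apply, ← iterate_add_apply, ← add_assoc, iterate_succ_apply']
  exact truncate_mem f h _

lemma overNum_eq_of_iterate_eq {g : ℝ → ℝ} {i j : ℕ} (hx : x ∈ periodicPts g)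
    (hy : y ∈ periodicPts g) (hxy : g^[i] x = g^[j] y) : overNum g x = overNum g y := by
  rw [← overNum_iterate hx i, hxy, overNum_iterate hy j]

/-- A clamped value is `a` or `b`, so a periodic orbit passing through one is the orbit of `x`. -/
lemma apply_iterate_truncate {i j : ℕ} (ha : (truncate f h)^[i] x = a)
    (hb : (truncate f h)^[j] x = b) (hx : x ∈ periodicPts (truncate f h))
    (hy : y ∈ periodicPts (truncate f h))
    (h_ne : overNum (truncate f h) x ≠ overNum (truncate f h) y) (n : ℕ) :
    f ((truncate f h)^[n] y) = truncate f h ((truncate f h)^[n] y) := by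
  rcases truncate_eq_or (f := f) (h := h) (iterate_truncate_mem hy n) with h_eq | h_eq | h_eq
  · exact h_eq.symm
  · rw [← iterate_succ_apply' (truncate f h) n y] at h_eq
    exact absurd (overNum_eq_of_iterate_eq hx hy (ha.trans h_eq.symm)) h_ne
  · rw [← iterate_succ_apply' (truncate f h) n y] at h_eq
    exact absurd (overNum_eq_of_iterate_eq hx hy (hb.trans h_eq.symm)) h_ne

theorem exists_mem_overNum_eq {I : Set ℝ} (hI : I.OrdConnected) (hf : ContinuousOn f I)
    (h_maps : MapsTo f I I) (hxI : x ∈ I) (hx : 2 ≤ minimalPeriod f x) {r : ℚ}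
    (hr : overNum f x < r) (hr' : r ≤ 1 / 2) :
    ∃ y ∈ I, 2 ≤ minimalPeriod f y ∧ overNum f y = r := by
  have h_finite := finite_range_iterate (mem_periodicPts_of_two_le hx)
  obtain ⟨_, ⟨i, rfl⟩, h_min⟩ := exists_min_image _ id h_finite ⟨x, 0, rfl⟩
  obtain ⟨_, ⟨j, rfl⟩, h_max⟩ := exists_max_image _ id h_finite ⟨x, 0, rfl⟩
  simp only [id, forall_mem_range] at h_min h_max
  have h_hull : Icc (f^[i] x) (f^[j] x) ⊆ I :=
    hI.out (h_maps.iterate i hxI) (h_maps.iterate j hxI)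
  set F := truncate f (h_min j)
  have hFx (n : ℕ) : F (f^[n] x) = f (f^[n] x) := by
    refine truncate_eq ⟨h_min n, h_max n⟩ ?_
    rw [← iterate_succ_apply' f n x]
    exact ⟨h_min (n + 1), h_max (n + 1)⟩
  have hx_period := minimalPeriod_eq_of_eqOn_orbit hFx
  rw [← overNum_eq_of_eqOn_orbit hFx] at hr
  obtain ⟨y, hy, rfl⟩ :=
    exists_overNum_eq (continuous_truncate (hf.mono h_hull)) (hx_period ▸ hx) hr hr'
  have hy_per := mem_periodicPts_of_two_le hy
  have hfy := apply_iterate_truncate (iterate_eq_of_eqOn_orbit hFx i)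
    (iterate_eq_of_eqOn_orbit hFx j) (mem_periodicPts_of_two_le (hx_period ▸ hx)) hy_per hr.ne
  refine ⟨y, h_hull (iterate_truncate_mem hy_per 0), ?_, overNum_eq_of_eqOn_orbit hfy⟩
  rwa [minimalPeriod_eq_of_eqOn_orbit hfy]

end Truncation

lemma exists_eq_setOf_le_or_lt {S : Set ℚ} {b : ℚ} (h_nonempty : S.Nonempty)
    (h_below : BddBelow S) (h_le : ∀ r ∈ S, r ≤ b)
    (h_up : ∀ r ∈ S, ∀ s, r < s → s ≤ b → s ∈ S) :
    ∃ c : ℝ, S = {r : ℚ | c ≤ r ∧ r ≤ b} ∨ S = {r : ℚ | c < r ∧ r ≤ b} := by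
  have h_glb : IsGLB ((↑) '' S : Set ℝ) (sInf ((↑) '' S)) :=
    isGLB_csInf (h_nonempty.image _) (Rat.cast_mono.map_bddBelow h_below)
  set c := sInf ((↑) '' S : Set ℝ)
  have h_mem {s : ℚ} (hcs : c < s) (hs : s ≤ b) : s ∈ S := by
    obtain ⟨_, ⟨r, hr, rfl⟩, -, hrs⟩ := h_glb.exists_between hcs
    exact h_up r hr s (mod_cast hrs) hs
  have h_ge {r : ℚ} (hr : r ∈ S) : c ≤ r := h_glb.1 (mem_image_of_mem _ hr)
  by_cases h_attained : ∃ r ∈ S, (r : ℝ) = c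
  · obtain ⟨r₀, hr₀, h_eq⟩ := h_attained
    refine ⟨c, .inl (Subset.antisymm (fun r hr ↦ ⟨h_ge hr, h_le r hr⟩) fun r ⟨hcr, hr⟩ ↦ ?_)⟩
    rcases hcr.lt_or_eq with h_lt | h_eq'
    · exact h_mem h_lt hr
    · obtain rfl : r₀ = r := mod_cast h_eq.trans h_eq'
      exact hr₀
  · push Not at h_attained
    exact ⟨c, .inr (Subset.antisymm
      (fun r hr ↦ ⟨(h_ge hr).lt_of_ne (h_attained r hr).symm, h_le r hr⟩)
      fun r ⟨hcr, hr⟩ ↦ h_mem hcr hr)⟩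

end OverRotation

open OverRotation in
theorem overRotation_interval_general {I : Set ℝ} (hI : I.OrdConnected) {f : ℝ → ℝ}
    (hf : ContinuousOn f I) (hmaps : Set.MapsTo f I I) :
    (∀ x ∈ I, 2 ≤ minimalPeriod f x → ∀ r : ℚ, overNum f x < r → r ≤ 1 / 2 →
        ∃ y ∈ I, 2 ≤ minimalPeriod f y ∧ overNum f y = r) ∧
    (overNumSet f I = ∅ ∨ overNumSet f I = {1 / 2} ∨
      ∃ c : ℝ, overNumSet f I = {r : ℚ | c ≤ (r : ℝ) ∧ r ≤ 1 / 2} ∨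
        overNumSet f I = {r : ℚ | c < (r : ℝ) ∧ r ≤ 1 / 2}) := by
  refine ⟨fun _ hxI hx _ ↦ exists_mem_overNum_eq hI hf hmaps hxI hx, ?_⟩
  rcases (overNumSet f I).eq_empty_or_nonempty with h_empty | h_nonempty
  · exact .inl h_empty
  refine .inr (.inr (exists_eq_setOf_le_or_lt h_nonempty ⟨0, ?_⟩ ?_ ?_))
  · rintro _ ⟨x, -, -, rfl⟩
    exact overNum_nonneg f x
  · rintro _ ⟨x, -, -, rfl⟩
    exact overNum_le_half f x
  · rintro _ ⟨x, hxI, hx, rfl⟩ s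
    exact exists_mem_overNum_eq hI hf hmaps hxI hx

/-- If `f` has a cycle with over-rotation number `ρ` and `r` is rational with
`ρ < r ≤ 1/2`, then `f` has a cycle with over-rotation number `r`. Consequently, the set
of over-rotation numbers of all cycles of period larger than `1` is either the
intersection of `ℚ` with an interval whose one endpoint is `1/2`, or `{1/2}`, or empty. -/
theorem overRotation_interval (a b : ℝ) (hab : a ≤ b) (f : ℝ → ℝ)
    (hf : ContinuousOn f (Set.Icc a b))
    (hmaps : Set.MapsTo f (Set.Icc a b) (Set.Icc a b)) :
    (∀ x ∈ Set.Icc a b, 2 ≤ minimalPeriod f x → ∀ r : ℚ,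
        overNum f x < r → r ≤ 1 / 2 →
        ∃ y ∈ Set.Icc a b, 2 ≤ minimalPeriod f y ∧ overNum f y = r) ∧
    (overNumSet f (Set.Icc a b) = ∅ ∨
      overNumSet f (Set.Icc a b) = {1 / 2} ∨
      ∃ c : ℝ,
        overNumSet f (Set.Icc a b) = {r : ℚ | c ≤ (r : ℝ) ∧ r ≤ 1 / 2} ∨
        overNumSet f (Set.Icc a b) = {r : ℚ | c < (r : ℝ) ∧ r ≤ 1 / 2}) := by
  exact overRotation_interval_general Set.ordConnected_Icc hf hmaps
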